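/- Let k ≥ 1. Let M, N ∈ M_k{−1,1}, let r ∈ {−1,1}^k with first entry r_1 = 1, let a, b ∈ {−1,1}^k, and let ε ∈ {−1, 1}. Let B be the (2k+1)×(2k+1) bordered block matrix B = [[M, M, −a], [−N, N, −b], [ε·rᵀ, rᵀ, 1]]. Then |det B| ≤ 2^k · Θ_k · Θ_{k+1}. -/

import Mathlib

/-- `Mset k hk` is the set of k×k real matrices with all entries in {−1, 1}
whose first column is all ones. -/
def Mset (k : ℕ) (hk : 0 < k) : Set (Matrix (Fin k) (Fin k) ℝ) :=
  {A | (∀ i j, A i j = 1 ∨ A i j = -1) ∧ ∀ i, A i ⟨0, hk⟩ = 1}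

/-- `Theta k hk` is the maximum of `|det A|` over `A ∈ Mset k hk`. -/
noncomputable def Theta (k : ℕ) (hk : 0 < k) : ℝ :=
  sSup ((fun A : Matrix (Fin k) (Fin k) ℝ => |A.det|) '' Mset k hk)

/-!
One block column operation makes `B` block triangular. When `ε = -1`, adding the second block
column to the first turns the first into `[2M, 0, 0]`, so
`det B = 2 ^ k * det M * det [[N, -b], [rᵀ, 1]]`. When `ε = 1`, interchange the first two block
rows and the first two block columns, which preserves the determinant and gives
`[[N, -N, -b], [M, M, -a], [rᵀ, rᵀ, 1]]`; subtracting the second block column from the first then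
yields `det B = 2 ^ k * det N * det [[M, -a], [rᵀ, 1]]`. As `r` starts with `1`, the bordered
factor is the determinant of a matrix in `M_{k+1}{−1,1}`.
-/

open Matrix

section Determinant

variable {n m l R : Type*} [Fintype n] [DecidableEq n] [Fintype m] [DecidableEq m]
  [Fintype l] [DecidableEq l] [CommRing R]

theorem det_fromBlocks_mul_right (P : Matrix n n R) (X : Matrix n m R) (L : Matrix m n R)
    (Y : Matrix m m R) :
    (fromBlocks P X (Y * L) Y).det = (P - X * L).det * Y.det := by
  have clear_column : fromBlocks P X (Y * L) Y * fromBlocks 1 0 (-L) 1 =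
      fromBlocks (P - X * L) X 0 Y := by
    simp [fromBlocks_multiply, sub_eq_add_neg]
  simpa [det_fromBlocks_zero₁₂, det_fromBlocks_zero₂₁] using congrArg det clear_column

theorem det_fromBlocks_fromBlocks_assoc (P : Matrix n n R) (X : Matrix n m R) (Z : Matrix m n R)
    (Y : Matrix m m R) (u : Matrix n l R) (v : Matrix m l R) (q : Matrix l n R)
    (r : Matrix l m R) (D : Matrix l l R) :
    (fromBlocks (fromBlocks P X Z Y) (fromRows u v) (fromCols q r) D).det =
      (fromBlocks P (fromCols X u) (fromRows Z q) (fromBlocks Y v r D)).det := by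
  rw [← det_submatrix_equiv_self (Equiv.sumAssoc n m l)]
  congr 1
  ext ((i | i) | i) ((j | j) | j) <;> rfl

theorem det_fromBlocks_fromBlocks_swap (P : Matrix n n R) (X : Matrix n m R) (Z : Matrix m n R)
    (Y : Matrix m m R) (u : Matrix n l R) (v : Matrix m l R) (q : Matrix l n R)
    (r : Matrix l m R) (D : Matrix l l R) :
    (fromBlocks (fromBlocks P X Z Y) (fromRows u v) (fromCols q r) D).det =
      (fromBlocks (fromBlocks Y Z X P) (fromRows v u) (fromCols r q) D).det := by
  rw [← det_submatrix_equiv_self ((Equiv.sumComm n m).sumCongr (Equiv.refl l))]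
  congr 1
  ext ((i | i) | i) ((j | j) | j) <;> rfl

theorem det_bordered_fromBlocks_mul_right (P : Matrix n n R) (X : Matrix n m R)
    (L : Matrix m n R) (Y : Matrix m m R) (u : Matrix n l R) (v : Matrix m l R)
    (r : Matrix l m R) (D : Matrix l l R) :
    (fromBlocks (fromBlocks P X (Y * L) Y) (fromRows u v) (fromCols (r * L) r) D).det =
      (P - X * L).det * (fromBlocks Y v r D).det := by
  have factor_column :
      fromRows (Y * L) (r * L) = fromBlocks Y v r D * fromRows L (0 : Matrix l n R) := by
    simp [fromBlocks_mul_fromRows]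
  rw [det_fromBlocks_fromBlocks_assoc, factor_column, det_fromBlocks_mul_right]
  simp [fromCols_mul_fromRows]

variable (M N : Matrix n n R) (u v : Matrix n l R) (r : Matrix l n R) (D : Matrix l l R)

theorem det_bordered_of_opposite_rows :
    (fromBlocks (fromBlocks M M (-N) N) (fromRows u v) (fromCols (-r) r) D).det =
      2 ^ Fintype.card n * M.det * (fromBlocks N v r D).det := by
  have h := det_bordered_fromBlocks_mul_right M M (-1) N u v r D
  simpa [← two_smul R M, det_smul] using h

theorem det_bordered_of_equal_rows :
    (fromBlocks (fromBlocks M M (-N) N) (fromRows u v) (fromCols r r) D).det =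
      2 ^ Fintype.card n * N.det * (fromBlocks M u r D).det := by
  have h := det_bordered_fromBlocks_mul_right N (-N) 1 M v u r D
  rw [det_fromBlocks_fromBlocks_swap]
  simpa [← two_smul R N, det_smul] using h

end Determinant

section Theta

variable {k : ℕ} {hk : 0 < k} {P Q : Matrix (Fin k) (Fin k) ℝ} {c r : Fin k → ℝ}

theorem bddAbove_abs_det_image_mset :
    BddAbove ((fun A : Matrix (Fin k) (Fin k) ℝ => |A.det|) '' Mset k hk) := by
  refine ⟨(Fintype.card (Fin k)).factorial • (1 : ℝ) ^ Fintype.card (Fin k), ?_⟩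
  rintro _ ⟨A, hA, rfl⟩
  refine det_le (abv := AbsoluteValue.abs) fun i j => ?_
  rcases hA.1 i j with h | h <;> simp [h]

theorem abs_det_le_theta (hP : P ∈ Mset k hk) : |P.det| ≤ Theta k hk :=
  le_csSup bddAbove_abs_det_image_mset ⟨P, hP, rfl⟩

theorem theta_nonneg : 0 ≤ Theta k hk :=
  Real.sSup_nonneg <| by
    rintro _ ⟨A, -, rfl⟩
    exact abs_nonneg A.det

theorem reindex_bordered_mem_mset (hQ : Q ∈ Mset k hk) (hc : ∀ i, c i = 1 ∨ c i = -1)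
    (hr : ∀ i, r i = 1 ∨ r i = -1) (hr0 : r ⟨0, hk⟩ = 1) :
    reindex finSumFinEquiv finSumFinEquiv
        (fromBlocks Q (replicateCol (Fin 1) c) (replicateRow (Fin 1) r) 1) ∈
      Mset (k + 1) k.succ_pos := by
  have first_index :
      finSumFinEquiv.symm (⟨0, k.succ_pos⟩ : Fin (k + 1)) = Sum.inl ⟨0, hk⟩ :=
    finSumFinEquiv_symm_apply_castAdd ⟨0, hk⟩
  refine ⟨fun i j => ?_, fun i => ?_⟩
  · rw [reindex_apply, submatrix_apply]
    rcases finSumFinEquiv.symm i with i | i <;> rcases finSumFinEquiv.symm j with j | j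
    · exact hQ.1 i j
    · exact hc i
    · exact hr j
    · simp [Subsingleton.elim i j]
  · rw [reindex_apply, submatrix_apply, first_index]
    rcases finSumFinEquiv.symm i with i | _
    · exact hQ.2 i
    · exact hr0

theorem abs_det_bordered_le_theta (hQ : Q ∈ Mset k hk) (hc : ∀ i, c i = 1 ∨ c i = -1)
    (hr : ∀ i, r i = 1 ∨ r i = -1) (hr0 : r ⟨0, hk⟩ = 1) :
    |(fromBlocks Q (replicateCol (Fin 1) c) (replicateRow (Fin 1) r) 1).det| ≤
      Theta (k + 1) k.succ_pos := by
  rw [← det_reindex_self finSumFinEquiv]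
  exact abs_det_le_theta (reindex_bordered_mem_mset hQ hc hr hr0)

theorem abs_two_pow_mul_det_mul_det_bordered_le (hP : P ∈ Mset k hk) (hQ : Q ∈ Mset k hk)
    (hc : ∀ i, c i = 1 ∨ c i = -1) (hr : ∀ i, r i = 1 ∨ r i = -1) (hr0 : r ⟨0, hk⟩ = 1) :
    |2 ^ k * P.det * (fromBlocks Q (replicateCol (Fin 1) c) (replicateRow (Fin 1) r) 1).det| ≤
      2 ^ k * Theta k hk * Theta (k + 1) k.succ_pos := by
  rw [abs_mul, abs_mul, abs_of_pos (by positivity : (0 : ℝ) < 2 ^ k)]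
  gcongr
  · exact mul_nonneg (by positivity) theta_nonneg
  · exact abs_det_le_theta hP
  · exact abs_det_bordered_le_theta hQ hc hr hr0

end Theta

/-- For `M, N ∈ M_k{−1,1}`, `a, b, r ∈ {−1,1}^k` with `r 0 = 1` and `ε ∈ {−1,1}`,
the bordered (2k+1)×(2k+1) matrix `[[M, M, −a], [−N, N, −b], [ε·rᵀ, rᵀ, 1]]`
satisfies `|det B| ≤ 2^k · Θ_k · Θ_{k+1}`. -/
theorem bordered_det_le (k : ℕ) (hk : 0 < k) (M N : Matrix (Fin k) (Fin k) ℝ)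
    (hM : M ∈ Mset k hk) (hN : N ∈ Mset k hk) (a b r : Fin k → ℝ)
    (ha : ∀ i, a i = 1 ∨ a i = -1) (hb : ∀ i, b i = 1 ∨ b i = -1)
    (hr : ∀ i, r i = 1 ∨ r i = -1) (hr0 : r ⟨0, hk⟩ = 1)
    (ε : ℝ) (hε : ε = 1 ∨ ε = -1) :
    |(Matrix.fromBlocks (Matrix.fromBlocks M M (-N) N)
        (Matrix.of fun i (_ : Fin 1) => Sum.elim (fun s => -a s) (fun s => -b s) i)
        (Matrix.of fun (_ : Fin 1) w => Sum.elim (fun s => ε * r s) r w)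
        (1 : Matrix (Fin 1) (Fin 1) ℝ)).det| ≤
      2 ^ k * Theta k hk * Theta (k + 1) k.succ_pos := by
  have col_eq : (of fun i (_ : Fin 1) => Sum.elim (fun s => -a s) (fun s => -b s) i) =
      fromRows (replicateCol (Fin 1) (-a)) (replicateCol (Fin 1) (-b)) := by
    ext (i | i) j <;> rfl
  have row_eq : (of fun (_ : Fin 1) w => Sum.elim (fun s => ε * r s) r w) =
      fromCols (ε • replicateRow (Fin 1) r) (replicateRow (Fin 1) r) := by
    ext i (j | j) <;> rfl
  have neg_sign {c : Fin k → ℝ} (hc : ∀ i, c i = 1 ∨ c i = -1) (i : Fin k) :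
      (-c) i = 1 ∨ (-c) i = -1 := by
    rcases hc i with h | h <;> simp [h]
  rw [col_eq, row_eq]
  rcases hε with rfl | rfl
  · rw [one_smul, det_bordered_of_equal_rows, Fintype.card_fin]
    exact abs_two_pow_mul_det_mul_det_bordered_le hN hM (neg_sign ha) hr hr0
  · rw [neg_one_smul, det_bordered_of_opposite_rows, Fintype.card_fin]
    exact abs_two_pow_mul_det_mul_det_bordered_le hM hN (neg_sign hb) hr hr0
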